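/- arXiv:1302.1678 — 3 statements merged into one kernel-verified Lean document; each statement's English description precedes it below -/
import Mathlib

section
/- Let j ≥ 0 and let P be a real polynomial of degree j satisfying ∫₀¹ P(x) xⁿ dx = 0 for every integer 0 ≤ n < j (in particular, P may be the shifted Legendre polynomial P_j). Let E be a real normed vector space and let ψ : ℝ → E be a C^∞ map (more generally, C^j on a neighborhood of 0). Then the map h ↦ ∫₀¹ P(τ) ψ(τh) dτ is O(h^j) as h → 0⁺; i.e., there exist constants C, h₀ > 0 such that ‖∫₀¹ P(τ) ψ(τh) dτ‖ ≤ C h^j for all h ∈ (0, h₀]. -/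
open MeasureTheory Polynomial

/-- The shifted Legendre polynomial `P j`, orthonormal on `[0,1]`. -/
noncomputable def legP (j : ℕ) : ℝ → ℝ := fun x =>
  (Real.sqrt (2 * j + 1) / (Nat.factorial j)) *
    (Polynomial.derivative^[j] ((Polynomial.X ^ 2 - Polynomial.X) ^ j)).eval x

/-! Vanishing moments of order less than `n` annihilate the Taylor polynomial of `ψ` at `0`
of degree less than `n`, so `∫₀¹ w(τ) ψ(τh) dτ` only sees the Taylor remainder, which is `O((τh)ⁿ)`
and hence `O(hⁿ)` uniformly in `τ ∈ [0, 1]`. -/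

section

open Set Filter Topology Asymptotics

variable {E F : Type*} [NormedAddCommGroup E] [NormedSpace ℝ E]
  [NormedAddCommGroup F] [NormedSpace ℝ F]

theorem exists_convex_contDiffOn_of_contDiffWithinAt {n : ℕ} {f : F → E} {s : Set F} {x : F}
    (hs : Convex ℝ s) (hx : x ∈ s) (hf : ContDiffWithinAt ℝ n f s x) :
    ∃ t, Convex ℝ t ∧ x ∈ t ∧ 𝓝[t] x = 𝓝[s] x ∧ ContDiffOn ℝ n f t := by
  obtain ⟨u, hu, hxu, hfu⟩ := hf.contDiffOn' le_rfl (by simp)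
  rw [insert_eq_of_mem hx] at hfu
  obtain ⟨r, hr, hru⟩ := Metric.isOpen_iff.1 hu x hxu
  exact ⟨s ∩ Metric.ball x r, hs.inter (convex_ball x r), ⟨hx, Metric.mem_ball_self hr⟩,
    nhdsWithin_inter_of_mem' (mem_nhdsWithin_of_mem_nhds (Metric.ball_mem_nhds x hr)),
    hfu.mono (inter_subset_inter_right s hru)⟩

theorem isBigO_sub_sum_range_taylor {n : ℕ} {f : ℝ → E} {s : Set ℝ} {x₀ : ℝ}
    (hs : Convex ℝ s) (hx₀ : x₀ ∈ s) (hf : ContDiffOn ℝ n f s) :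
    (fun x ↦ f x - ∑ k ∈ Finset.range n,
        (x - x₀) ^ k • ((k.factorial : ℝ)⁻¹ • iteratedDerivWithin k f s x₀))
      =O[𝓝[s] x₀] fun x ↦ (x - x₀) ^ n := by
  have remainder := (taylor_isLittleO hs hx₀ hf).isBigO
  have leading : (fun x ↦ (x - x₀) ^ n • ((n.factorial : ℝ)⁻¹ • iteratedDerivWithin n f s x₀))
      =O[𝓝[s] x₀] fun x ↦ (x - x₀) ^ n := by
    simpa only [smul_eq_mul, mul_one] using
      (isBigO_refl (fun x ↦ (x - x₀) ^ n) (𝓝[s] x₀)).smul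
        (isBigO_const_const ((n.factorial : ℝ)⁻¹ • iteratedDerivWithin n f s x₀)
          (one_ne_zero (α := ℝ)) _)
  refine (remainder.add leading).congr_left fun x ↦ ?_
  simp only [taylor_within_apply, Finset.sum_range_succ, mul_comm _ ((x - x₀) ^ _), mul_smul]
  abel

theorem eventually_forall_mem_Icc_smul {s : Set F} (hs : StarConvex ℝ 0 s) {p : F → Prop}
    (hp : ∀ᶠ x in 𝓝[s] 0, p x) :
    ∀ᶠ x in 𝓝[s] 0, ∀ τ ∈ Icc (0 : ℝ) 1, p (τ • x) := by
  obtain ⟨r, hr, hball⟩ := Metric.mem_nhdsWithin_iff.1 hp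
  filter_upwards [self_mem_nhdsWithin, mem_nhdsWithin_of_mem_nhds (Metric.ball_mem_nhds 0 hr)]
    with x hxs hxr τ hτ
  have hstar_ball := (convex_ball (0 : F) r).starConvex (Metric.mem_ball_self hr)
  exact hball ⟨hstar_ball.smul_mem hxr hτ.1 hτ.2, hs.smul_mem hxs hτ.1 hτ.2⟩

theorem isBigO_integral_smul_comp_mul {w : ℝ → ℝ} (hw : IntervalIntegrable w volume 0 1)
    {n : ℕ} {R : ℝ → E} {s : Set ℝ} (hs : StarConvex ℝ 0 s) (hR : R =O[𝓝[s] 0] (· ^ n)) :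
    (fun h ↦ ∫ τ in (0 : ℝ)..1, w τ • R (τ * h)) =O[𝓝[s] 0] (· ^ n) := by
  obtain ⟨c, hc, hbound⟩ := hR.exists_nonneg
  refine .of_bound ((∫ τ in (0 : ℝ)..1, ‖w τ‖) * c) ?_
  filter_upwards [eventually_forall_mem_Icc_smul hs hbound.bound] with h hh
  have pointwise : ∀ τ ∈ Ioc (0 : ℝ) 1, ‖w τ • R (τ * h)‖ ≤ ‖w τ‖ * (c * ‖h ^ n‖) := by
    intro τ hτ
    have hτn : ‖(τ * h) ^ n‖ ≤ ‖h ^ n‖ := by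
      rw [mul_pow, norm_mul, norm_pow τ, Real.norm_of_nonneg hτ.1.le]
      exact mul_le_of_le_one_left (norm_nonneg _) (pow_le_one₀ hτ.1.le hτ.2)
    calc ‖w τ • R (τ * h)‖ = ‖w τ‖ * ‖R (τ * h)‖ := norm_smul _ _
      _ ≤ ‖w τ‖ * (c * ‖(τ * h) ^ n‖) := by gcongr; exact hh τ (Ioc_subset_Icc_self hτ)
      _ ≤ ‖w τ‖ * (c * ‖h ^ n‖) := by gcongr
  calc ‖∫ τ in (0 : ℝ)..1, w τ • R (τ * h)‖
      ≤ ∫ τ in (0 : ℝ)..1, ‖w τ‖ * (c * ‖h ^ n‖) :=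
        intervalIntegral.norm_integral_le_of_norm_le zero_le_one (.of_forall pointwise)
          (hw.norm.mul_const _)
    _ = (∫ τ in (0 : ℝ)..1, ‖w τ‖) * c * ‖h ^ n‖ := by
        rw [intervalIntegral.integral_mul_const, mul_assoc]

theorem integral_smul_sum_range_pow_smul_eq_zero [CompleteSpace E] {w : ℝ → ℝ} {a b : ℝ}
    (hw : IntervalIntegrable w volume a b) {n : ℕ}
    (hmoment : ∀ k < n, ∫ τ in a..b, w τ * τ ^ k = 0) (c : ℕ → E) (h : ℝ) :
    ∫ τ in a..b, w τ • ∑ k ∈ Finset.range n, (τ * h) ^ k • c k = 0 := by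
  have expand (τ : ℝ) : w τ • ∑ k ∈ Finset.range n, (τ * h) ^ k • c k =
      ∑ k ∈ Finset.range n, (w τ * τ ^ k) • (h ^ k • c k) := by
    simp only [Finset.smul_sum, smul_smul, mul_pow, mul_assoc]
  have integrable (k : ℕ) :
      IntervalIntegrable (fun τ ↦ (w τ * τ ^ k) • (h ^ k • c k)) volume a b :=
    (hw.mul_continuousOn (by fun_prop)).smul_continuousOn continuousOn_const
  simp only [expand]
  rw [intervalIntegral.integral_finsetSum fun k _ ↦ integrable k]
  refine Finset.sum_eq_zero fun k hk ↦ ?_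
  rw [intervalIntegral.integral_smul_const, hmoment k (Finset.mem_range.1 hk), zero_smul]

theorem integral_smul_comp_mul_eq_integral_smul_sub [CompleteSpace E] {w : ℝ → ℝ}
    (hw : IntervalIntegrable w volume 0 1) {n : ℕ}
    (hmoment : ∀ k < n, ∫ τ in (0 : ℝ)..1, w τ * τ ^ k = 0) {ψ : ℝ → E} {s : Set ℝ}
    (hs : StarConvex ℝ 0 s) (hψ : ContinuousOn ψ s) (c : ℕ → E) {h : ℝ} (hh : h ∈ s) :
    ∫ τ in (0 : ℝ)..1, w τ • ψ (τ * h) =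
      ∫ τ in (0 : ℝ)..1, w τ • (ψ (τ * h) - ∑ k ∈ Finset.range n, (τ * h) ^ k • c k) := by
  have hcomp : ContinuousOn (fun τ ↦ ψ (τ * h)) (uIcc 0 1) := by
    rw [uIcc_of_le zero_le_one]
    exact hψ.comp (by fun_prop) fun τ hτ ↦ hs.smul_mem hh hτ.1 hτ.2
  simp only [smul_sub]
  rw [intervalIntegral.integral_sub (hw.smul_continuousOn hcomp)
      (hw.smul_continuousOn (by fun_prop)),
    integral_smul_sum_range_pow_smul_eq_zero hw hmoment, sub_zero]

theorem exists_forall_norm_le_mul_pow_of_isBigO_nhdsGT {G : Type*} [SeminormedAddCommGroup G]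
    {f : ℝ → G} {n : ℕ} (hf : f =O[𝓝[>] 0] (· ^ n)) :
    ∃ C > (0 : ℝ), ∃ h₀ > (0 : ℝ), ∀ h : ℝ, 0 < h → h ≤ h₀ → ‖f h‖ ≤ C * h ^ n := by
  obtain ⟨C, hC, h₀, hh₀, bound⟩ := hf.exists_mem_basis (nhdsGT_basis_Ioc 0)
  refine ⟨C, hC, h₀, hh₀, fun h hpos hle ↦ ?_⟩
  simpa only [Real.norm_of_nonneg (pow_nonneg hpos.le n)] using bound h ⟨hpos, hle⟩

theorem stmt0_general [CompleteSpace E] {w : ℝ → ℝ} (hw : IntervalIntegrable w volume 0 1) {n : ℕ}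
    (hmoment : ∀ k < n, ∫ τ in (0 : ℝ)..1, w τ * τ ^ k = 0) {ψ : ℝ → E} {s : Set ℝ}
    (hs : Convex ℝ s) (h0 : 0 ∈ s) (hψ : ContDiffWithinAt ℝ n ψ s 0) :
    (fun h ↦ ∫ τ in (0 : ℝ)..1, w τ • ψ (τ * h)) =O[𝓝[s] 0] (· ^ n) := by
  obtain ⟨t, ht, h0t, hst, hψt⟩ := exists_convex_contDiffOn_of_contDiffWithinAt hs h0 hψ
  rw [← hst]
  have hstar : StarConvex ℝ 0 t := ht.starConvex h0t
  have remainder := isBigO_sub_sum_range_taylor ht h0t hψt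
  simp only [sub_zero] at remainder
  refine (isBigO_integral_smul_comp_mul hw hstar remainder).congr' ?_ .rfl
  filter_upwards [self_mem_nhdsWithin] with h hh
  exact (integral_smul_comp_mul_eq_integral_smul_sub hw hmoment hstar hψt.continuousOn _ hh).symm

end

/-- Lemma 1 of the paper.  If `P` is a real polynomial of degree `j`
orthogonal on `[0,1]` to all powers `xⁿ`, `n < j`, and `ψ : ℝ → E` is `C^∞`, then
`h ↦ ∫₀¹ P(τ) ψ(τ h) dτ` is `O(h^j)` as `h → 0⁺`. -/
theorem stmt0 (j : ℕ) (P : Polynomial ℝ) (hdeg : P.degree = j)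
    (horth : ∀ n : ℕ, n < j → ∫ x in (0:ℝ)..1, P.eval x * x ^ n = 0)
    {E : Type*} [NormedAddCommGroup E] [NormedSpace ℝ E] [CompleteSpace E]
    (ψ : ℝ → E) (hψ : ContDiff ℝ (⊤ : ℕ∞) ψ) :
    ∃ C > (0:ℝ), ∃ h₀ > (0:ℝ), ∀ h : ℝ, 0 < h → h ≤ h₀ →
      ‖∫ τ in (0:ℝ)..1, P.eval τ • ψ (τ * h)‖ ≤ C * h ^ j := by
  have isBigO := stmt0_general (P.continuous.intervalIntegrable 0 1) horth (convex_Ici 0)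
    Set.self_mem_Ici (hψ.of_le (mod_cast le_top)).contDiffWithinAt
  exact exists_forall_norm_le_mul_pow_of_isBigO_nhdsGT
    (isBigO.mono (nhdsWithin_mono 0 Set.Ioi_subset_Ici_self))
end

section
/- (Lemma 3 of the paper, vector-field form.) Let d ≥ 1, let g₁, g₂ : ℝ^d → ℝ^d be C^∞ maps with ⟨g₁(y), g₂(y)⟩ = 0 for every y ∈ ℝ^d, let σ : ℝ → ℝ^d be a C^∞ curve, and let s ≥ 1. Then the quantity b(h) := Σ_{j=0}^{s−1} ⟨∫₀¹ P_j(τ) g₁(σ(τh)) dτ, ∫₀¹ P_j(τ) g₂(σ(τh)) dτ⟩ is O(h^{2s}) as h → 0⁺. -/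
open MeasureTheory Polynomial
open scoped RealInnerProductSpace

/-!
Let `R f` be the component of `f` orthogonal in `L²(0, 1)` to the Legendre polynomials of degree
less than `s`. For `fᵢ(τ) = gᵢ(σ(τh))` the sum `b(h)` is `∫ ⟪f₁, f₂⟫ - ∫ ⟪R f₁, R f₂⟫`, and the
first integral vanishes by pointwise orthogonality. By Cauchy–Schwarz `|b(h)|` is at most
`‖R f₁‖ ‖R f₂‖`, the product of the errors of best approximation by polynomials of degree less
than `s`, and Taylor polynomials bound each error by a multiple of `h ^ s`.
-/

theorem sqrt_integral_norm_sq_le_of_norm_le {α E : Type*} {m : MeasurableSpace α}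
    {μ : Measure α} [IsProbabilityMeasure μ] [NormedAddCommGroup E] {f : α → E}
    {A : ℝ} (hf : ∀ᵐ x ∂μ, ‖f x‖ ≤ A) : √(∫ x, ‖f x‖ ^ 2 ∂μ) ≤ A := by
  obtain ⟨x₀, hx₀⟩ := hf.exists
  refine Real.sqrt_le_iff.2 ⟨(norm_nonneg _).trans hx₀, ?_⟩
  calc ∫ x, ‖f x‖ ^ 2 ∂μ ≤ ∫ _, A ^ 2 ∂μ :=
        integral_mono_of_nonneg (.of_forall fun x => sq_nonneg _) (integrable_const _)
          (hf.mono fun x hx => pow_le_pow_left₀ (norm_nonneg _) hx 2)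
    _ = A ^ 2 := by simp

section L2Orthonormal

variable {α ι E : Type*} {m : MeasurableSpace α} {μ : Measure α}
  [NormedAddCommGroup E] [InnerProductSpace ℝ E]

/-- Orthonormality in `L²(μ)` of a family of real functions, stated for honest functions rather
than for their classes in `Lp`. -/
structure IsL2Orthonormal (φ : ι → α → ℝ) (μ : Measure α) : Prop where
  memLp : ∀ i, MemLp (φ i) 2 μ
  integral_mul_self : ∀ i, ∫ x, φ i x * φ i x ∂μ = 1
  integral_mul_eq_zero : ∀ i j, i ≠ j → ∫ x, φ i x * φ j x ∂μ = 0

/-- The component of `f` orthogonal to the span of the `φ i`, `i ∈ s`, in `L²(μ; E)`: the function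
minus its Fourier sum, whose coefficients `∫ φ i • f` are vectors. Its norm is the error of best
approximation of `f` by the span. -/
noncomputable def l2Residual (φ : ι → α → ℝ) (s : Finset ι) (μ : Measure α) (f : α → E) : α → E :=
  fun x => f x - ∑ i ∈ s, φ i x • ∫ y, φ i y • f y ∂μ

theorem integrable_inner_of_memLp {f g : α → E} (hf : MemLp f 2 μ) (hg : MemLp g 2 μ) :
    Integrable (fun x => ⟪f x, g x⟫) μ :=
  memLp_one_iff_integrable.1 ((innerSL ℝ).memLp_of_bilin 1 hf hg)

theorem abs_integral_inner_le_sqrt_mul_sqrt {f g : α → E} (hf : MemLp f 2 μ)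
    (hg : MemLp g 2 μ) :
    |∫ x, ⟪f x, g x⟫ ∂μ| ≤ √(∫ x, ‖f x‖ ^ 2 ∂μ) * √(∫ x, ‖g x‖ ^ 2 ∂μ) := by
  have inner_toLp {u v : α → E} (hu : MemLp u 2 μ) (hv : MemLp v 2 μ) :
      ⟪hu.toLp u, hv.toLp v⟫ = ∫ x, ⟪u x, v x⟫ ∂μ :=
    integral_congr_ae <| by
      filter_upwards [hu.coeFn_toLp, hv.coeFn_toLp] with x hux hvx
      rw [hux, hvx]
  have norm_toLp {u : α → E} (hu : MemLp u 2 μ) : ‖hu.toLp u‖ = √(∫ x, ‖u x‖ ^ 2 ∂μ) := by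
    simp only [norm_eq_sqrt_real_inner (hu.toLp u), inner_toLp hu hu, real_inner_self_eq_norm_sq]
  rw [← inner_toLp hf hg, ← norm_toLp hf, ← norm_toLp hg]
  exact abs_real_inner_le_norm _ _

theorem integral_inner_sum_smul [CompleteSpace E] {φ : ι → α → ℝ} {s : Finset ι} {g : α → E}
    (hg : ∀ i ∈ s, Integrable (fun x => φ i x • g x) μ) (w : ι → E) :
    ∫ x, ⟪∑ i ∈ s, φ i x • w i, g x⟫ ∂μ = ∑ i ∈ s, ⟪w i, ∫ x, φ i x • g x ∂μ⟫ := by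
  simp only [sum_inner, real_inner_smul_left, ← real_inner_smul_right]
  rw [integral_finsetSum s fun i hi => (hg i hi).const_inner (w i)]
  exact Finset.sum_congr rfl fun i hi => integral_inner (hg i hi) (w i)

namespace IsL2Orthonormal

variable {φ : ι → α → ℝ} (hφ : IsL2Orthonormal φ μ) {s : Finset ι} {f g : α → E}

include hφ

theorem integrable_smul (hf : MemLp f 2 μ) (i : ι) : Integrable (fun x => φ i x • f x) μ :=
  memLp_one_iff_integrable.1 (hf.smul (hφ.memLp i))

theorem memLp_sum_smul (s : Finset ι) (w : ι → E) :
    MemLp (fun x => ∑ i ∈ s, φ i x • w i) 2 μ :=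
  memLp_finsetSum s fun i _ =>
    (ContinuousLinearMap.toSpanSingleton ℝ (w i)).comp_memLp' (hφ.memLp i)

theorem memLp_l2Residual (hf : MemLp f 2 μ) : MemLp (l2Residual φ s μ f) 2 μ :=
  hf.sub (hφ.memLp_sum_smul s _)

variable [CompleteSpace E]

theorem integral_smul_sum_smul (w : ι → E) {i : ι} (hi : i ∈ s) :
    ∫ x, φ i x • ∑ j ∈ s, φ j x • w j ∂μ = w i := by
  simp only [Finset.smul_sum, smul_smul]
  rw [integral_finsetSum s fun j _ =>
    Integrable.smul_const (f := fun x => φ i x * φ j x)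
      ((hφ.memLp i).integrable_mul (hφ.memLp j)) (w j)]
  simp only [integral_smul_const]
  rw [Finset.sum_eq_single_of_mem i hi
    fun j _ hj => by rw [hφ.integral_mul_eq_zero i j hj.symm, zero_smul],
    hφ.integral_mul_self, one_smul]

theorem integral_smul_l2Residual (hf : MemLp f 2 μ) {i : ι} (hi : i ∈ s) :
    ∫ x, φ i x • l2Residual φ s μ f x ∂μ = 0 := by
  simp only [l2Residual, smul_sub]
  rw [integral_sub (hφ.integrable_smul hf i) (hφ.integrable_smul (hφ.memLp_sum_smul s _) i),
    hφ.integral_smul_sum_smul _ hi, sub_self]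

theorem l2Residual_sub_sum_smul (hf : MemLp f 2 μ) (w : ι → E) :
    l2Residual φ s μ (fun x => f x - ∑ i ∈ s, φ i x • w i) = l2Residual φ s μ f := by
  have coeff (i : ι) (hi : i ∈ s) :
      ∫ x, φ i x • (f x - ∑ j ∈ s, φ j x • w j) ∂μ = ∫ x, φ i x • f x ∂μ - w i := by
    simp only [smul_sub]
    rw [integral_sub (hφ.integrable_smul hf i) (hφ.integrable_smul (hφ.memLp_sum_smul s w) i),
      hφ.integral_smul_sum_smul w hi]
  funext x
  have fourierSum : ∑ i ∈ s, φ i x • ∫ y, φ i y • (f y - ∑ j ∈ s, φ j y • w j) ∂μ =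
      ∑ i ∈ s, φ i x • ∫ y, φ i y • f y ∂μ - ∑ i ∈ s, φ i x • w i := by
    rw [← Finset.sum_sub_distrib]
    exact Finset.sum_congr rfl fun i hi => by rw [coeff i hi, smul_sub]
  simp only [l2Residual, fourierSum]
  abel

theorem integral_inner_l2Residual (hf : MemLp f 2 μ) (hg : MemLp g 2 μ) :
    ∫ x, ⟪l2Residual φ s μ f x, l2Residual φ s μ g x⟫ ∂μ =
      ∫ x, ⟪f x, g x⟫ ∂μ - ∑ i ∈ s, ⟪∫ x, φ i x • f x ∂μ, ∫ x, φ i x • g x ∂μ⟫ := by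
  have hRg := hφ.memLp_l2Residual (s := s) hg
  have sum_f_orthogonal :
      ∫ x, ⟪∑ i ∈ s, φ i x • ∫ y, φ i y • f y ∂μ, l2Residual φ s μ g x⟫ ∂μ = 0 := by
    rw [integral_inner_sum_smul fun i _ => hφ.integrable_smul hRg i]
    exact Finset.sum_eq_zero fun i hi => by
      rw [hφ.integral_smul_l2Residual hg hi, inner_zero_right]
  have inner_f_sum : ∫ x, ⟪f x, ∑ i ∈ s, φ i x • ∫ y, φ i y • g y ∂μ⟫ ∂μ =
      ∑ i ∈ s, ⟪∫ x, φ i x • f x ∂μ, ∫ x, φ i x • g x ∂μ⟫ := by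
    simpa only [real_inner_comm] using integral_inner_sum_smul (s := s)
      (fun i _ => hφ.integrable_smul hf i) fun i => ∫ x, φ i x • g x ∂μ
  calc ∫ x, ⟪l2Residual φ s μ f x, l2Residual φ s μ g x⟫ ∂μ
      = ∫ x, ⟪f x, l2Residual φ s μ g x⟫ ∂μ := by
        simp only [l2Residual.eq_1 φ s μ f, inner_sub_left]
        rw [integral_sub (integrable_inner_of_memLp hf hRg)
          (integrable_inner_of_memLp (hφ.memLp_sum_smul s _) hRg), sum_f_orthogonal, sub_zero]
    _ = ∫ x, ⟪f x, g x⟫ ∂μ - ∫ x, ⟪f x, ∑ i ∈ s, φ i x • ∫ y, φ i y • g y ∂μ⟫ ∂μ := by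
        simp only [l2Residual, inner_sub_right]
        exact integral_sub (integrable_inner_of_memLp hf hg)
          (integrable_inner_of_memLp hf (hφ.memLp_sum_smul s _))
    _ = ∫ x, ⟪f x, g x⟫ ∂μ - ∑ i ∈ s, ⟪∫ x, φ i x • f x ∂μ, ∫ x, φ i x • g x ∂μ⟫ := by
        rw [inner_f_sum]

theorem integral_norm_sq_l2Residual_le (hf : MemLp f 2 μ) :
    ∫ x, ‖l2Residual φ s μ f x‖ ^ 2 ∂μ ≤ ∫ x, ‖f x‖ ^ 2 ∂μ := by
  have pythagoras := hφ.integral_inner_l2Residual (s := s) hf hf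
  simp only [real_inner_self_eq_norm_sq] at pythagoras
  rw [pythagoras]
  exact sub_le_self _ (Finset.sum_nonneg fun i _ => sq_nonneg _)

theorem integral_norm_sq_l2Residual_le_sub_sum_smul (hf : MemLp f 2 μ) (w : ι → E) :
    ∫ x, ‖l2Residual φ s μ f x‖ ^ 2 ∂μ ≤ ∫ x, ‖f x - ∑ i ∈ s, φ i x • w i‖ ^ 2 ∂μ := by
  rw [← hφ.l2Residual_sub_sum_smul hf w]
  exact hφ.integral_norm_sq_l2Residual_le (hf.sub (hφ.memLp_sum_smul s w))

theorem abs_sum_inner_integral_smul_sub_le (hf : MemLp f 2 μ) (hg : MemLp g 2 μ) (v w : ι → E) :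
    |∫ x, ⟪f x, g x⟫ ∂μ - ∑ i ∈ s, ⟪∫ x, φ i x • f x ∂μ, ∫ x, φ i x • g x ∂μ⟫| ≤
      √(∫ x, ‖f x - ∑ i ∈ s, φ i x • v i‖ ^ 2 ∂μ) *
        √(∫ x, ‖g x - ∑ i ∈ s, φ i x • w i‖ ^ 2 ∂μ) := by
  rw [← hφ.integral_inner_l2Residual hf hg]
  calc _ ≤ _ := abs_integral_inner_le_sqrt_mul_sqrt (hφ.memLp_l2Residual hf)
        (hφ.memLp_l2Residual hg)
    _ ≤ _ := by
      gcongr √?_ * √?_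
      · exact hφ.integral_norm_sq_l2Residual_le_sub_sum_smul hf v
      · exact hφ.integral_norm_sq_l2Residual_le_sub_sum_smul hg w

end IsL2Orthonormal

end L2Orthonormal

theorem memLp_two_restrict_Ioc_of_continuousOn {E : Type*} [NormedAddCommGroup E] {f : ℝ → E}
    {a b : ℝ} (hf : ContinuousOn f (Set.Icc a b)) : MemLp f 2 (volume.restrict (Set.Ioc a b)) := by
  obtain ⟨C, hC⟩ := isCompact_Icc.exists_bound_of_continuousOn hf
  refine MemLp.of_bound ((hf.mono Set.Ioc_subset_Icc_self).aestronglyMeasurable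
    measurableSet_Ioc) C ?_
  exact (ae_restrict_mem measurableSet_Ioc).mono fun x hx => hC x (Set.Ioc_subset_Icc_self hx)

section Rodrigues

theorem integral_derivative_mul_eval (p q : ℝ[X]) {a b : ℝ} (ha : p.eval a = 0)
    (hb : p.eval b = 0) :
    ∫ x in a..b, (derivative p).eval x * q.eval x =
      -∫ x in a..b, p.eval x * (derivative q).eval x := by
  rw [intervalIntegral.integral_mul_deriv_eq_deriv_mul (fun x _ => p.hasDerivAt x)
    (fun x _ => q.hasDerivAt x) (p.derivative.continuous.intervalIntegrable a b)
    (q.derivative.continuous.intervalIntegrable a b), ha, hb]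
  ring

theorem integral_iterate_derivative_pow_mul_eval {w : ℝ[X]} {a b : ℝ} (ha : w.eval a = 0)
    (hb : w.eval b = 0) {k n : ℕ} (hk : k ≤ n) (q : ℝ[X]) :
    ∫ x in a..b, (derivative^[k] (w ^ n)).eval x * q.eval x =
      (-1) ^ k * ∫ x in a..b, (w ^ n).eval x * (derivative^[k] q).eval x := by
  induction k generalizing q with
  | zero => simp
  | succ k ih =>
    obtain ⟨r, hr⟩ : w ∣ derivative^[k] (w ^ n) :=
      (dvd_pow_self w (by lia : n - k ≠ 0)).trans (pow_sub_dvd_iterate_derivative_pow w n k)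
    rw [Function.iterate_succ_apply', integral_derivative_mul_eval _ _
      (by rw [hr, eval_mul, ha, zero_mul]) (by rw [hr, eval_mul, hb, zero_mul]),
      ih (by lia), Function.iterate_succ_apply]
    ring

theorem iterate_derivative_eq_C_of_natDegree_le {R : Type*} [Semiring R] {p : R[X]} {n : ℕ}
    (hp : p.natDegree ≤ n) : derivative^[n] p = C (n.factorial • p.coeff n) := by
  have constant : (derivative^[n] p).natDegree = 0 := by
    have := natDegree_iterate_derivative p n
    lia
  rw [eq_C_of_natDegree_eq_zero constant, coeff_iterate_derivative, zero_add,
    Nat.descFactorial_self]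

end Rodrigues

theorem integral_pow_mul_one_sub_pow (a b : ℕ) :
    ∫ x in (0 : ℝ)..1, x ^ a * (1 - x) ^ b =
      (a.factorial * b.factorial : ℝ) / (a + b + 1).factorial := by
  have beta : Complex.betaIntegral (a + 1) (b + 1) =
      ((∫ x in (0 : ℝ)..1, x ^ a * (1 - x) ^ b : ℝ) : ℂ) := by
    rw [Complex.betaIntegral, ← intervalIntegral.integral_ofReal]
    simp [Complex.cpow_natCast]
  have gamma := Complex.betaIntegral_eq_Gamma_mul_div (a + 1) (b + 1)
    (by rw [← Nat.cast_succ, Complex.natCast_re]; positivity)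
    (by rw [← Nat.cast_succ, Complex.natCast_re]; positivity)
  rw [beta, show (a + 1 + (b + 1) : ℂ) = ((a + b + 1 : ℕ) : ℂ) + 1 by push_cast; ring,
    Complex.Gamma_nat_eq_factorial, Complex.Gamma_nat_eq_factorial,
    Complex.Gamma_nat_eq_factorial] at gamma
  apply Complex.ofReal_injective
  rw [gamma]
  push_cast
  rfl

section Legendre

/-- The shifted Legendre polynomial `legP j` as an element of `ℝ[X]`, for arguments by degree
and by differentiation. -/
noncomputable def legPoly (j : ℕ) : ℝ[X] :=
  C (√(2 * j + 1) / j.factorial) * derivative^[j] ((X ^ 2 - X) ^ j)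

theorem eval_legPoly (j : ℕ) (x : ℝ) : (legPoly j).eval x = legP j x := by
  simp only [legPoly, legP, eval_mul, eval_C]

theorem continuous_legP (j : ℕ) : Continuous (legP j) := by
  simpa only [eval_legPoly] using (legPoly j).continuous

theorem monic_X_sq_sub_X_pow (j : ℕ) : ((X ^ 2 - X : ℝ[X]) ^ j).Monic := by
  have : (X ^ 2 - X : ℝ[X]).Monic := by monicity!
  exact this.pow j

theorem natDegree_X_sq_sub_X_pow (j : ℕ) : ((X ^ 2 - X : ℝ[X]) ^ j).natDegree = 2 * j := by
  have : (X ^ 2 - X : ℝ[X]).natDegree = 2 := by compute_degree!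
  rw [natDegree_pow, this, mul_comm]

theorem iterate_derivative_legPoly (j : ℕ) :
    derivative^[j] (legPoly j) = C (√(2 * j + 1) / j.factorial * (2 * j).factorial) := by
  have leading : ((X ^ 2 - X : ℝ[X]) ^ j).coeff (2 * j) = 1 := by
    simpa only [natDegree_X_sq_sub_X_pow] using (monic_X_sq_sub_X_pow j).coeff_natDegree
  rw [legPoly, iterate_derivative_C_mul, ← Function.iterate_add_apply, ← two_mul,
    iterate_derivative_eq_C_of_natDegree_le (natDegree_X_sq_sub_X_pow j).le, leading,
    nsmul_one, C_mul]

theorem degree_legPoly (j : ℕ) : (legPoly j).degree = j := by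
  have iterate_ne_zero : derivative^[j] (legPoly j) ≠ 0 := by
    rw [iterate_derivative_legPoly, C_ne_zero]
    positivity
  have natDegree_le : (legPoly j).natDegree ≤ j := by
    have := natDegree_iterate_derivative ((X ^ 2 - X : ℝ[X]) ^ j) j
    rw [natDegree_X_sq_sub_X_pow] at this
    exact (natDegree_C_mul_le _ _).trans (by lia)
  have le_natDegree : j ≤ (legPoly j).natDegree :=
    not_lt.1 fun h => iterate_ne_zero (iterate_derivative_eq_zero h)
  have ne_zero : legPoly j ≠ 0 := fun h => iterate_ne_zero (by rw [h, iterate_derivative_zero])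
  rw [degree_eq_natDegree ne_zero, natDegree_le.antisymm le_natDegree]

theorem integral_legP_mul_eval (j : ℕ) (q : ℝ[X]) :
    ∫ x in (0 : ℝ)..1, legP j x * q.eval x = √(2 * j + 1) / j.factorial *
      ∫ x in (0 : ℝ)..1, x ^ j * (1 - x) ^ j * (derivative^[j] q).eval x := by
  have rodrigues := integral_iterate_derivative_pow_mul_eval (w := X ^ 2 - X) (a := 0) (b := 1)
    (by simp) (by simp) le_rfl q (k := j)
  simp only [legP, mul_assoc, intervalIntegral.integral_const_mul, rodrigues]
  rw [← intervalIntegral.integral_const_mul]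
  congr! 3
  -- The sign from `j` integrations by parts turns `(x² - x)^j` into `x^j (1 - x)^j`.
  simp only [eval_pow, eval_sub, eval_X, ← mul_assoc, ← mul_pow]
  ring

theorem integral_legP_mul_eval_eq_zero {j : ℕ} {q : ℝ[X]} (hq : q.natDegree < j) :
    ∫ x in (0 : ℝ)..1, legP j x * q.eval x = 0 := by
  rw [integral_legP_mul_eval, iterate_derivative_eq_zero hq]
  simp

theorem integral_legP_mul_legP_of_ne {i j : ℕ} (hij : i ≠ j) :
    ∫ x in (0 : ℝ)..1, legP i x * legP j x = 0 := by
  wlog hlt : j < i generalizing i j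
  · simpa only [mul_comm] using this hij.symm (hij.lt_or_gt.resolve_right hlt)
  simpa only [eval_legPoly] using integral_legP_mul_eval_eq_zero
    ((natDegree_eq_of_degree_eq_some (degree_legPoly j)).trans_lt hlt)

theorem integral_legP_mul_self (j : ℕ) : ∫ x in (0 : ℝ)..1, legP j x * legP j x = 1 := by
  have h := integral_legP_mul_eval j (legPoly j)
  simp only [eval_legPoly, iterate_derivative_legPoly, eval_C,
    intervalIntegral.integral_mul_const, integral_pow_mul_one_sub_pow] at h
  have sq_sqrt : √(2 * j + 1 : ℝ) ^ 2 = 2 * j + 1 := Real.sq_sqrt (by positivity)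
  rw [h, ← two_mul, Nat.factorial_succ]
  push_cast
  field_simp
  rw [sq_sqrt]

theorem isL2Orthonormal_legP : IsL2Orthonormal legP (volume.restrict (Set.Ioc 0 1)) where
  memLp j := memLp_two_restrict_Ioc_of_continuousOn (continuous_legP j).continuousOn
  integral_mul_self j := by
    rw [← intervalIntegral.integral_of_le zero_le_one, integral_legP_mul_self]
  integral_mul_eq_zero i j hij := by
    rw [← intervalIntegral.integral_of_le zero_le_one, integral_legP_mul_legP_of_ne hij]

end Legendre

theorem exists_eq_sum_smul_sequence_of_degree_lt {K : Type*} [Field K] (S : Polynomial.Sequence K)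
    {n : ℕ} {p : K[X]} (hp : p.degree < n) :
    ∃ c : ℕ → K, p = ∑ j ∈ Finset.range n, c j • S j := by
  have mem_span : p ∈ Submodule.span K (S '' Finset.range n) := by
    rwa [Finset.coe_range,
      S.span_degreeLT fun i _ => (leadingCoeff_ne_zero.2 (S.ne_zero i)).isUnit, mem_degreeLT]
  obtain ⟨c, hc, rfl⟩ := (Finsupp.mem_span_image_iff_linearCombination K).1 mem_span
  exact ⟨c, Finsupp.sum_of_support_subset c (Finset.coe_subset.1 hc) _ fun i _ => zero_smul K _⟩

theorem exists_sum_pow_smul_eq_sum_eval_sequence_smul {K V : Type*} [Field K] [AddCommGroup V]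
    [Module K V] (S : Polynomial.Sequence K) (n : ℕ) (v : ℕ → V) :
    ∃ w : ℕ → V, ∀ x : K,
      ∑ k ∈ Finset.range n, x ^ k • v k = ∑ j ∈ Finset.range n, (S j).eval x • w j := by
  have expand (k : ℕ) (hk : k ∈ Finset.range n) :
      ∃ c : ℕ → K, (X ^ k : K[X]) = ∑ j ∈ Finset.range n, c j • S j :=
    exists_eq_sum_smul_sequence_of_degree_lt S <| by
      rw [degree_X_pow]
      exact_mod_cast Finset.mem_range.1 hk
  choose! c hc using expand
  refine ⟨fun j => ∑ k ∈ Finset.range n, c k j • v k, fun x => ?_⟩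
  have eval_expand (k : ℕ) (hk : k ∈ Finset.range n) :
      x ^ k = ∑ j ∈ Finset.range n, (S j).eval x * c k j := by
    simpa [eval_finsetSum, mul_comm] using congrArg (eval x) (hc k hk)
  simp only [Finset.smul_sum, smul_smul]
  rw [Finset.sum_comm]
  exact Finset.sum_congr rfl fun k hk => by rw [eval_expand k hk, Finset.sum_smul]

theorem exists_norm_sub_sum_pow_smul_le {E : Type*} [NormedAddCommGroup E] [NormedSpace ℝ E]
    {f : ℝ → E} {a : ℝ} (ha : 0 ≤ a) {n : ℕ} (hf : ContDiffOn ℝ n f (Set.Icc 0 a)) :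
    ∃ (C : ℝ) (v : ℕ → E), ∀ x ∈ Set.Icc 0 a,
      ‖f x - ∑ k ∈ Finset.range n, x ^ k • v k‖ ≤ C * x ^ n := by
  cases n with
  | zero => simpa using isCompact_Icc.exists_bound_of_continuousOn hf.continuousOn
  | succ n =>
    obtain ⟨C, hC⟩ := exists_taylor_mean_remainder_bound ha (by exact_mod_cast hf)
    refine ⟨C, fun k => (k.factorial : ℝ)⁻¹ • iteratedDerivWithin k f (Set.Icc 0 a) 0,
      fun x hx => ?_⟩
    simpa only [taylor_within_apply, sub_zero, smul_smul, mul_comm] using hC x hx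

theorem exists_norm_comp_mul_sub_sum_legP_smul_le {E : Type*} [NormedAddCommGroup E]
    [NormedSpace ℝ E] {f : ℝ → E} {a : ℝ} (ha : 0 ≤ a) {n : ℕ}
    (hf : ContDiffOn ℝ n f (Set.Icc 0 a)) :
    ∃ C ≥ 0, ∀ h ∈ Set.Icc 0 a, ∃ w : ℕ → E, ∀ τ ∈ Set.Icc (0 : ℝ) 1,
      ‖f (τ * h) - ∑ j ∈ Finset.range n, legP j τ • w j‖ ≤ C * h ^ n := by
  obtain ⟨C, v, hC⟩ := exists_norm_sub_sum_pow_smul_le ha hf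
  refine ⟨|C|, abs_nonneg C, fun h ⟨h_nonneg, h_le⟩ => ?_⟩
  obtain ⟨w, hw⟩ := exists_sum_pow_smul_eq_sum_eval_sequence_smul ⟨legPoly, degree_legPoly⟩ n
    fun k => h ^ k • v k
  refine ⟨w, fun τ ⟨τ_nonneg, τ_le⟩ => ?_⟩
  have taylorSum : ∑ j ∈ Finset.range n, legP j τ • w j =
      ∑ k ∈ Finset.range n, (τ * h) ^ k • v k := by
    simpa only [smul_smul, ← mul_pow, eval_legPoly] using (hw τ).symm
  have τh_le_h : τ * h ≤ h := mul_le_of_le_one_left h_nonneg τ_le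
  have τh_nonneg : 0 ≤ τ * h := mul_nonneg τ_nonneg h_nonneg
  calc ‖f (τ * h) - ∑ j ∈ Finset.range n, legP j τ • w j‖
      ≤ C * (τ * h) ^ n := by
        rw [taylorSum]
        exact hC _ ⟨τh_nonneg, τh_le_h.trans h_le⟩
    _ ≤ |C| * h ^ n := by
        gcongr
        exact le_abs_self C

theorem abs_sum_inner_integral_legP_smul_le {E : Type*} [NormedAddCommGroup E]
    [InnerProductSpace ℝ E] [CompleteSpace E] {f g : ℝ → E} {n : ℕ} {A B : ℝ}
    (hf : ContinuousOn f (Set.Icc 0 1)) (hg : ContinuousOn g (Set.Icc 0 1))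
    (horth : ∀ τ ∈ Set.Icc (0 : ℝ) 1, ⟪f τ, g τ⟫ = 0) {v w : ℕ → E}
    (hfv : ∀ τ ∈ Set.Icc (0 : ℝ) 1, ‖f τ - ∑ j ∈ Finset.range n, legP j τ • v j‖ ≤ A)
    (hgw : ∀ τ ∈ Set.Icc (0 : ℝ) 1, ‖g τ - ∑ j ∈ Finset.range n, legP j τ • w j‖ ≤ B) :
    |∑ j ∈ Finset.range n,
        ⟪∫ τ in (0 : ℝ)..1, legP j τ • f τ, ∫ τ in (0 : ℝ)..1, legP j τ • g τ⟫| ≤ A * B := by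
  have : IsProbabilityMeasure (volume.restrict (Set.Ioc (0 : ℝ) 1)) := ⟨by simp⟩
  have ae_mem : ∀ᵐ τ ∂volume.restrict (Set.Ioc (0 : ℝ) 1), τ ∈ Set.Icc (0 : ℝ) 1 :=
    (ae_restrict_mem measurableSet_Ioc).mono fun τ hτ => Set.Ioc_subset_Icc_self hτ
  have integral_inner_eq_zero : ∫ τ in Set.Ioc (0 : ℝ) 1, ⟪f τ, g τ⟫ = 0 :=
    integral_eq_zero_of_ae (ae_mem.mono horth)
  have projection := isL2Orthonormal_legP.abs_sum_inner_integral_smul_sub_le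
    (s := Finset.range n) (memLp_two_restrict_Ioc_of_continuousOn hf)
    (memLp_two_restrict_Ioc_of_continuousOn hg) v w
  rw [integral_inner_eq_zero, zero_sub, abs_neg] at projection
  simp only [intervalIntegral.integral_of_le zero_le_one]
  have error_f := sqrt_integral_norm_sq_le_of_norm_le (ae_mem.mono hfv)
  have error_g := sqrt_integral_norm_sq_le_of_norm_le (ae_mem.mono hgw)
  exact projection.trans <|
    mul_le_mul error_f error_g (Real.sqrt_nonneg _) ((Real.sqrt_nonneg _).trans error_f)

theorem stmt3_general {E : Type*} [NormedAddCommGroup E] [InnerProductSpace ℝ E]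
    [CompleteSpace E] {f₁ f₂ : ℝ → E} {a : ℝ} (ha : 0 ≤ a) {s : ℕ}
    (hf₁ : ContDiffOn ℝ s f₁ (Set.Icc 0 a)) (hf₂ : ContDiffOn ℝ s f₂ (Set.Icc 0 a))
    (horth : ∀ t ∈ Set.Icc 0 a, ⟪f₁ t, f₂ t⟫ = 0) :
    ∃ C > 0, ∀ h ∈ Set.Icc 0 a,
      |∑ j ∈ Finset.range s, ⟪∫ τ in (0 : ℝ)..1, legP j τ • f₁ (τ * h),
        ∫ τ in (0 : ℝ)..1, legP j τ • f₂ (τ * h)⟫| ≤ C * h ^ (2 * s) := by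
  obtain ⟨C₁, hC₁, approx₁⟩ := exists_norm_comp_mul_sub_sum_legP_smul_le ha hf₁
  obtain ⟨C₂, hC₂, approx₂⟩ := exists_norm_comp_mul_sub_sum_legP_smul_le ha hf₂
  refine ⟨C₁ * C₂ + 1, by positivity, fun h hh => ?_⟩
  obtain ⟨w₁, hw₁⟩ := approx₁ h hh
  obtain ⟨w₂, hw₂⟩ := approx₂ h hh
  have h_nonneg : 0 ≤ h := hh.1
  have dilation : Set.MapsTo (· * h) (Set.Icc (0 : ℝ) 1) (Set.Icc 0 a) := fun τ hτ =>
    ⟨mul_nonneg hτ.1 h_nonneg, (mul_le_of_le_one_left h_nonneg hτ.2).trans hh.2⟩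
  have continuousOn_dilation : ContinuousOn (· * h) (Set.Icc (0 : ℝ) 1) :=
    (continuous_mul_const h).continuousOn
  calc _ ≤ C₁ * h ^ s * (C₂ * h ^ s) := abs_sum_inner_integral_legP_smul_le
        (hf₁.continuousOn.comp continuousOn_dilation dilation)
        (hf₂.continuousOn.comp continuousOn_dilation dilation)
        (fun τ hτ => horth _ (dilation hτ)) hw₁ hw₂
    _ = C₁ * C₂ * h ^ (2 * s) := by ring
    _ ≤ (C₁ * C₂ + 1) * h ^ (2 * s) := by
        gcongr
        linarith

/-- Lemma 3 of the paper, vector-field form.  If `g₁, g₂ : ℝ^d → ℝ^d` are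
`C^∞` with `⟨g₁(y), g₂(y)⟩ = 0` everywhere, `σ : ℝ → ℝ^d` is `C^∞` and `s ≥ 1`, then
`b(h) := ∑_{j=0}^{s-1} ⟨∫₀¹ P_j(τ) g₁(σ(τh)) dτ, ∫₀¹ P_j(τ) g₂(σ(τh)) dτ⟩` is `O(h^{2s})`
as `h → 0⁺`. -/
theorem stmt3 (d : ℕ) (hd : 1 ≤ d)
    (g₁ g₂ : EuclideanSpace ℝ (Fin d) → EuclideanSpace ℝ (Fin d))
    (hg₁ : ContDiff ℝ (⊤ : ℕ∞) g₁) (hg₂ : ContDiff ℝ (⊤ : ℕ∞) g₂)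
    (horth : ∀ y, ⟪g₁ y, g₂ y⟫ = 0)
    (σ : ℝ → EuclideanSpace ℝ (Fin d)) (hσ : ContDiff ℝ (⊤ : ℕ∞) σ)
    (s : ℕ) (hs : 1 ≤ s) :
    ∃ C > (0:ℝ), ∃ h₀ > (0:ℝ), ∀ h : ℝ, 0 < h → h ≤ h₀ →
      |∑ j ∈ Finset.range s,
          ⟪∫ τ in (0:ℝ)..1, legP j τ • g₁ (σ (τ * h)),
           ∫ τ in (0:ℝ)..1, legP j τ • g₂ (σ (τ * h))⟫| ≤ C * h ^ (2 * s) := by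
  obtain ⟨C, hC, bound⟩ := stmt3_general zero_le_one
    ((hg₁.comp hσ).of_le (mod_cast le_top)).contDiffOn
    ((hg₂.comp hσ).of_le (mod_cast le_top)).contDiffOn fun t _ => horth (σ t)
  exact ⟨C, hC, 1, one_pos, fun h h_pos h_le => bound h ⟨h_pos.le, h_le⟩⟩
end

section
/- (Lemma 4 of the paper.) Let d ≥ 1, let g₁, g₂ : ℝ^d → ℝ^d be C^∞ maps, let σ : ℝ → ℝ^d be a C^∞ curve, let s ≥ 1 and 1 ≤ ν < s. Then for every index j with s − ν ≤ j ≤ s − 1, the quantity h^{2(s−1−j)} · ⟨∫₀¹ P_j(τ) g₁(σ(τh)) dτ, ∫₀¹ P_j(τ) g₂(σ(τh)) dτ⟩ is O(h^{2s−2}) as h → 0⁺. In particular, every entry of the ν×ν matrix Γ(h) whose (i, j-indexed) columns are built from these quantities is O(h^{2s−2}). -/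
open MeasureTheory Polynomial
open scoped RealInnerProductSpace

/-!
The Legendre polynomial `P j` is, up to a constant, the `j`-th derivative of `(x² - x)ʲ`, all of
whose derivatives of order `< j` vanish at `0` and `1`. Integrating by parts `j` times therefore
moves all `j` derivatives onto `τ ↦ f (τ h)` without boundary terms, and each of them yields a
factor `h`; so `∫₀¹ P j τ • f (τ h) dτ = O(hʲ)`. The pairing of two such integrals is `O(h²ʲ)`, and
`2 (s - 1 - j) + 2 j = 2 s - 2`.
-/

section

open Asymptotics Topology

lemma isRoot_iterate_derivative_of_pow_dvd {R : Type*} [CommRing R] {p q : R[X]} {a : R}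
    {k n : ℕ} (hq : q.IsRoot a) (hdvd : q ^ n ∣ p) (hk : k < n) :
    (derivative^[k] p).IsRoot a :=
  hq.dvd <| (dvd_pow_self q (Nat.sub_ne_zero_of_lt hk)).trans
    (pow_sub_dvd_iterate_derivative_of_pow_dvd k hdvd)

lemma iteratedDeriv_polynomial_eval {𝕜 : Type*} [NontriviallyNormedField 𝕜] (p : 𝕜[X]) (n : ℕ) :
    iteratedDeriv n (fun x => p.eval x) = fun x => (derivative^[n] p).eval x := by
  induction n with
  | zero => simp only [iteratedDeriv_zero, Function.iterate_zero, id_eq]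
  | succ n ih =>
    rw [iteratedDeriv_succ, ih, Function.iterate_succ_apply']
    exact funext fun x => (derivative^[n] p).deriv

lemma exists_pos_forall_norm_le_of_isBigO_pow {E : Type*} [SeminormedAddCommGroup E] {φ : ℝ → E}
    {n : ℕ} (hφ : φ =O[𝓝[>] 0] fun h => h ^ n) :
    ∃ C > (0 : ℝ), ∃ h₀ > (0 : ℝ), ∀ h : ℝ, 0 < h → h ≤ h₀ → ‖φ h‖ ≤ C * h ^ n := by
  obtain ⟨C, hC, hbound⟩ := hφ.exists_pos
  obtain ⟨h₀, hh₀, hsub⟩ := mem_nhdsGT_iff_exists_Ioc_subset.1 hbound.bound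
  refine ⟨C, hC, h₀, hh₀, fun h h_pos h_le => ?_⟩
  calc ‖φ h‖ ≤ C * ‖h ^ n‖ := hsub ⟨h_pos, h_le⟩
    _ = C * h ^ n := by rw [Real.norm_of_nonneg (pow_nonneg h_pos.le n)]

section IntegrationByParts

variable {E : Type*} [NormedAddCommGroup E] [NormedSpace ℝ E] [CompleteSpace E]

lemma integral_iteratedDeriv_smul_eq {a b : ℝ} {n : ℕ} {u : ℝ → ℝ} {f : ℝ → E}
    (hu : ContDiff ℝ n u) (hf : ContDiff ℝ n f)
    (ha : ∀ k < n, iteratedDeriv k u a = 0) (hb : ∀ k < n, iteratedDeriv k u b = 0) :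
    ∫ x in a..b, iteratedDeriv n u x • f x =
      (-1 : ℝ) ^ n • ∫ x in a..b, u x • iteratedDeriv n f x := by
  induction n generalizing f with
  | zero => simp only [iteratedDeriv_zero, pow_zero, one_smul]
  | succ n ih =>
    have hu_deriv (x : ℝ) : HasDerivAt (iteratedDeriv n u) (iteratedDeriv (n + 1) u x) x := by
      rw [iteratedDeriv_succ]
      exact (hu.differentiable_iteratedDeriv' n x).hasDerivAt
    have hf_deriv (x : ℝ) : HasDerivAt f (deriv f x) x :=
      (hf.differentiable (by simp) x).hasDerivAt
    have hf' : ContDiff ℝ n (deriv f) := hf.deriv'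
    have parts := intervalIntegral.integral_smul_deriv_eq_deriv_smul
      (fun x _ => hu_deriv x) (fun x _ => hf_deriv x)
      ((hu.continuous_iteratedDeriv' _).intervalIntegrable a b)
      (hf'.continuous.intervalIntegrable a b)
    rw [ha n n.lt_succ_self, hb n n.lt_succ_self, zero_smul, zero_smul, sub_zero, zero_sub] at parts
    calc ∫ x in a..b, iteratedDeriv (n + 1) u x • f x
        = -∫ x in a..b, iteratedDeriv n u x • deriv f x := by rw [parts, neg_neg]
      _ = -((-1 : ℝ) ^ n • ∫ x in a..b, u x • iteratedDeriv n (deriv f) x) := by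
          rw [ih (hu.of_le (by simp)) hf' (fun k hk => ha k (by lia)) (fun k hk => hb k (by lia))]
      _ = (-1 : ℝ) ^ (n + 1) • ∫ x in a..b, u x • iteratedDeriv (n + 1) f x := by
          rw [iteratedDeriv_succ', pow_succ', neg_one_mul, neg_smul]

lemma integral_iteratedDeriv_smul_comp_mul_isBigO {a b : ℝ} {n : ℕ} {u : ℝ → ℝ} {f : ℝ → E}
    (hu : ContDiff ℝ n u) (hf : ContDiff ℝ n f)
    (ha : ∀ k < n, iteratedDeriv k u a = 0) (hb : ∀ k < n, iteratedDeriv k u b = 0) :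
    (fun h : ℝ => ∫ τ in a..b, iteratedDeriv n u τ • f (τ * h)) =O[𝓝 0] fun h => h ^ n := by
  have hscale (h : ℝ) : ∫ τ in a..b, iteratedDeriv n u τ • f (τ * h) =
      h ^ n • (-1 : ℝ) ^ n • ∫ τ in a..b, u τ • iteratedDeriv n f (τ * h) := by
    have hf_comp : ContDiff ℝ n fun τ : ℝ => f (h * τ) := hf.comp (contDiff_const.mul contDiff_id)
    simp only [mul_comm _ h]
    rw [integral_iteratedDeriv_smul_eq hu hf_comp ha hb, smul_comm,
      ← intervalIntegral.integral_smul (h ^ n)]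
    simp only [iteratedDeriv_comp_const_smul hf, smul_comm (u _)]
  have hcont : Continuous fun h : ℝ => ∫ τ in a..b, u τ • iteratedDeriv n f (τ * h) := by
    have := hf.continuous_iteratedDeriv' n
    fun_prop
  have hbounded : (fun h : ℝ => (-1 : ℝ) ^ n • ∫ τ in a..b, u τ • iteratedDeriv n f (τ * h))
      =O[𝓝 0] fun _ => (1 : ℝ) :=
    ((hcont.const_smul _).tendsto 0).isBigO_one ℝ
  simpa only [hscale, smul_eq_mul, mul_one] using
    (isBigO_refl (fun h : ℝ => h ^ n) (𝓝 0)).smul hbounded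

end IntegrationByParts

/-- The polynomial whose `j`-th derivative is the shifted Legendre polynomial `legP j` by Rodrigues'
formula, with the normalizing constant of `legP j` included. -/
noncomputable def legRodrigues (j : ℕ) : ℝ[X] :=
  C (√(2 * j + 1) / j.factorial) * (X ^ 2 - X) ^ j

lemma legP_eq_iteratedDeriv (j : ℕ) :
    legP j = iteratedDeriv j fun x => (legRodrigues j).eval x := by
  rw [iteratedDeriv_polynomial_eval]
  funext x
  simp only [legP, legRodrigues, iterate_derivative_C_mul, eval_mul, eval_C]

lemma iteratedDeriv_legRodrigues_eq_zero {j k : ℕ} {a : ℝ} (ha : a ^ 2 = a) (hk : k < j) :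
    iteratedDeriv k (fun x => (legRodrigues j).eval x) a = 0 := by
  have hroot : (X ^ 2 - X : ℝ[X]).IsRoot a := by simp [ha]
  rw [iteratedDeriv_polynomial_eval]
  exact isRoot_iterate_derivative_of_pow_dvd hroot (dvd_mul_left _ _) hk

lemma integral_legP_smul_comp_mul_isBigO {E : Type*} [NormedAddCommGroup E] [NormedSpace ℝ E]
    [CompleteSpace E] {j : ℕ} {f : ℝ → E} (hf : ContDiff ℝ j f) :
    (fun h : ℝ => ∫ τ in (0 : ℝ)..1, legP j τ • f (τ * h)) =O[𝓝 0] fun h => h ^ j := by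
  have hsmooth : ContDiff ℝ j fun x => (legRodrigues j).eval x :=
    (legRodrigues j).contDiff_aeval j
  rw [legP_eq_iteratedDeriv]
  exact integral_iteratedDeriv_smul_comp_mul_isBigO hsmooth hf
    (fun _ => iteratedDeriv_legRodrigues_eq_zero (by norm_num))
    (fun _ => iteratedDeriv_legRodrigues_eq_zero (by norm_num))

theorem stmt4_general {E F : Type*} [NormedAddCommGroup E] [InnerProductSpace ℝ E]
    [CompleteSpace E] [NormedAddCommGroup F] [NormedSpace ℝ F] {s j : ℕ} (hj : j < s)
    {g₁ g₂ : F → E} (hg₁ : ContDiff ℝ j g₁) (hg₂ : ContDiff ℝ j g₂)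
    {σ : ℝ → F} (hσ : ContDiff ℝ j σ) :
    (fun h : ℝ => h ^ (2 * (s - 1 - j)) *
      ⟪∫ τ in (0 : ℝ)..1, legP j τ • g₁ (σ (τ * h)),
        ∫ τ in (0 : ℝ)..1, legP j τ • g₂ (σ (τ * h))⟫) =O[𝓝 0] fun h => h ^ (2 * s - 2) := by
  have hpow (h : ℝ) : h ^ (2 * s - 2) = h ^ (2 * (s - 1 - j)) * (h ^ j * h ^ j) := by
    rw [← pow_add, ← pow_add]
    congr 1
    lia
  have h₁ := integral_legP_smul_comp_mul_isBigO (hg₁.comp hσ)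
  have h₂ := integral_legP_smul_comp_mul_isBigO (hg₂.comp hσ)
  have hinner := (isBoundedBilinearMap_inner (𝕜 := ℝ) (E := E)).isBigO_comp.trans
    (h₁.norm_left.mul h₂.norm_left)
  simpa only [hpow, Function.comp_apply] using
    (isBigO_refl (fun h : ℝ => h ^ (2 * (s - 1 - j))) (𝓝 0)).mul hinner

end

/-- Lemma 4 of the paper.  For `C^∞` maps `g₁, g₂ : ℝ^d → ℝ^d`, a `C^∞`
curve `σ`, `s ≥ 1`, `1 ≤ ν < s`, and every `j` with `s - ν ≤ j ≤ s - 1`, the quantity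
`h^{2(s-1-j)} ⟨∫₀¹ P_j(τ) g₁(σ(τh)) dτ, ∫₀¹ P_j(τ) g₂(σ(τh)) dτ⟩` (an arbitrary entry of the
matrix `Γ(h)`) is `O(h^{2s-2})` as `h → 0⁺`. -/
theorem stmt4 (d : ℕ) (hd : 1 ≤ d)
    (g₁ g₂ : EuclideanSpace ℝ (Fin d) → EuclideanSpace ℝ (Fin d))
    (hg₁ : ContDiff ℝ (⊤ : ℕ∞) g₁) (hg₂ : ContDiff ℝ (⊤ : ℕ∞) g₂)
    (σ : ℝ → EuclideanSpace ℝ (Fin d)) (hσ : ContDiff ℝ (⊤ : ℕ∞) σ)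
    (s ν : ℕ) (hν : 1 ≤ ν) (hνs : ν < s)
    (j : ℕ) (hj₁ : s - ν ≤ j) (hj₂ : j ≤ s - 1) :
    ∃ C > (0:ℝ), ∃ h₀ > (0:ℝ), ∀ h : ℝ, 0 < h → h ≤ h₀ →
      |h ^ (2 * (s - 1 - j)) *
          ⟪∫ τ in (0:ℝ)..1, legP j τ • g₁ (σ (τ * h)),
           ∫ τ in (0:ℝ)..1, legP j τ • g₂ (σ (τ * h))⟫| ≤ C * h ^ (2 * s - 2) := by
  exact exists_pos_forall_norm_le_of_isBigO_pow <|
    (stmt4_general (by lia) (contDiff_infty.1 hg₁ j) (contDiff_infty.1 hg₂ j)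
      (contDiff_infty.1 hσ j)).mono nhdsWithin_le_nhds
end
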